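/- Let p be an odd prime, q = p^m with m ≥ 1, and k a positive divisor of q−1 with −1 ∉ R_k (i.e. Γ = Γ(k,q) is directed). Set n = (q−1)/k and let a be the least positive integer such that n divides p^a − 1. Let A be the adjacency matrix of Γ. Then the set spectrum ℂ A has at least 3 elements; and it has exactly 3 elements if and only if k = 2·(p^m−1)/(p^a−1) and p^a ≡ 3 (mod 4). -/

import Mathlib

open scoped Classical

lemma gp_prim {F : Type*} [Field F] [Fintype F] : ∃ g : F, IsPrimitiveRoot g (Fintype.card F - 1) ∧
    ∀ x : F, x ≠ 0 → ∃ i : ℕ, x = g ^ i := by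
  obtain ⟨g, hg⟩ := IsCyclic.exists_generator (α := Fˣ)
  refine ⟨(g : F), ?_, ?_⟩
  · have h1 : orderOf g = Fintype.card F - 1 := by
      rw [orderOf_eq_card_of_forall_mem_zpowers hg, Nat.card_eq_fintype_card, Fintype.card_units]
    rw [← h1, ← orderOf_units]
    exact IsPrimitiveRoot.orderOf _
  · intro x hx
    have := hg (Units.mk0 x hx)
    rw [← mem_powers_iff_mem_zpowers] at this
    obtain ⟨i, hi⟩ := this
    refine ⟨i, ?_⟩
    have := congrArg (fun u : Fˣ => (u : F)) hi
    simpa using this.symm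

lemma gp_card {F : Type*} [Field F] [Fintype F] (d e : ℕ) (h : e * d = Fintype.card F - 1) :
    (Finset.univ.filter (fun x : F => x ^ d = 1)).card = d := by
  have hpos : 0 < Fintype.card F - 1 := by
    have := Fintype.one_lt_card (α := F); omega
  obtain ⟨g, hg, -⟩ := gp_prim (F := F)
  have hd : 0 < d := by
    rcases Nat.eq_zero_or_pos d with h0 | h0
    · subst h0; omega
    · exact h0
  have := (hg.pow hpos h.symm).card_nthRootsFinset
  refine Eq.trans ?_ this
  congr 1
  ext x
  simp [Polynomial.mem_nthRootsFinset hd]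

lemma gp_mem {F : Type*} [Field F] [Fintype F] (k n : ℕ) (h : k * n = Fintype.card F - 1) (x : F) :
    (∃ z : F, z ≠ 0 ∧ z ^ k = x) ↔ x ^ n = 1 := by
  have hpos : 0 < Fintype.card F - 1 := by
    have := Fintype.one_lt_card (α := F); omega
  have hn : 0 < n := by
    rcases Nat.eq_zero_or_pos n with h0 | h0
    · subst h0; omega
    · exact h0
  constructor
  · rintro ⟨z, hz, rfl⟩
    rw [← pow_mul, h]
    exact FiniteField.pow_card_sub_one_eq_one z hz
  · intro hx
    obtain ⟨g, hg, hgen⟩ := gp_prim (F := F)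
    have hx0 : x ≠ 0 := by
      rintro rfl
      rw [zero_pow hn.ne'] at hx
      exact zero_ne_one hx
    obtain ⟨i, rfl⟩ := hgen x hx0
    rw [← pow_mul, hg.pow_eq_one_iff_dvd, ← h] at hx
    obtain ⟨j, rfl⟩ := Nat.dvd_of_mul_dvd_mul_right hn hx
    refine ⟨g ^ j, pow_ne_zero _ (hg.ne_zero hpos.ne'), ?_⟩
    rw [← pow_mul, mul_comm]

/-- eigenvalues -/
noncomputable def gpLam {F : Type*} [Field F] [Fintype F] (ψ : AddChar F ℂ) (n : ℕ) (b : F) : ℂ :=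
  ∑ r ∈ Finset.univ.filter (fun x : F => x ^ n = 1), ψ (b * r)

noncomputable def gpP {F : Type*} [Field F] (ψ : AddChar F ℂ) : Matrix F F ℂ :=
  fun x b => ψ (b * x)

lemma gpP_unit {F : Type*} [Field F] [Fintype F] [DecidableEq F] (ψ : AddChar F ℂ)
    (hψ : ψ.IsPrimitive) : IsUnit (gpP ψ) := by
  have hq : (Fintype.card F : ℂ) ≠ 0 := by exact_mod_cast Fintype.card_ne_zero
  have : gpP ψ * ((Fintype.card F : ℂ)⁻¹ • Matrix.of (fun b x : F => ψ (-(b * x)))) = 1 := by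
    ext x y
    rw [Matrix.mul_smul, Matrix.smul_apply, Matrix.mul_apply]
    simp only [Matrix.of_apply]
    have h1 : ∀ b : F, gpP ψ x b * ψ (-(b * y)) = ψ (b * (x - y)) := by
      intro b
      rw [gpP, ← AddChar.map_add_eq_mul]
      congr 1; ring
    simp_rw [h1]
    rw [AddChar.sum_mulShift _ hψ, Matrix.one_apply]
    by_cases hxy : x = y
    · simp [hxy, hq]
    · simp [hxy, sub_eq_zero]
  exact (Matrix.isUnit_iff_isUnit_det _).2 (Matrix.isUnit_det_of_right_inverse this)

lemma gp_AP {F : Type*} [Field F] [Fintype F] [DecidableEq F] (ψ : AddChar F ℂ) (n : ℕ)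
    (A : Matrix F F ℂ) (hA : ∀ x y, A x y = if (y - x) ^ n = 1 then 1 else 0) :
    A * gpP ψ = gpP ψ * Matrix.diagonal (gpLam ψ n) := by
  ext x b
  rw [Matrix.mul_apply, Matrix.mul_diagonal, gpLam, Finset.mul_sum, Finset.sum_filter,
    ← Equiv.sum_comp (Equiv.addRight x)]
  apply Finset.sum_congr rfl
  intro r _
  simp only [hA, Equiv.coe_addRight, add_sub_cancel_right, gpP]
  split_ifs
  · rw [one_mul, ← AddChar.map_add_eq_mul]
    congr 1; ring
  · simp

lemma gpLam_neg {F : Type*} [Field F] [Fintype F] (ψ : AddChar F ℂ) (n : ℕ) (b : F) :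
    gpLam ψ n (-b) = (starRingEnd ℂ) (gpLam ψ n b) := by
  rw [gpLam, gpLam, map_sum]
  refine Finset.sum_congr rfl fun r _ => ?_
  rw [← AddChar.map_neg_eq_conj, neg_mul]

lemma gpLam_mul {F : Type*} [Field F] [Fintype F] (ψ : AddChar F ℂ) (n : ℕ) (hn : n ≠ 0) (b s : F)
    (hs : s ^ n = 1) : gpLam ψ n (b * s) = gpLam ψ n b := by
  have hs0 : s ≠ 0 := by rintro rfl; simp [hn] at hs
  rw [gpLam, gpLam, Finset.sum_filter, Finset.sum_filter]
  rw [← Equiv.sum_comp (Equiv.mulLeft₀ s hs0) (fun r => if r ^ n = 1 then ψ (b * r) else 0)]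
  refine Finset.sum_congr rfl fun r _ => ?_
  simp only [Equiv.mulLeft₀_apply, mul_pow, hs, one_mul, mul_assoc]

lemma gp_ATP {F : Type*} [Field F] [Fintype F] [DecidableEq F] (ψ : AddChar F ℂ) (n : ℕ)
    (A : Matrix F F ℂ) (hA : ∀ x y, A x y = if (y - x) ^ n = 1 then 1 else 0) :
    A.transpose * gpP ψ = gpP ψ * Matrix.diagonal (fun b => gpLam ψ n (-b)) := by
  ext x b
  rw [Matrix.mul_apply, Matrix.mul_diagonal, gpLam, Finset.mul_sum, Finset.sum_filter,
    ← Equiv.sum_comp (Equiv.subLeft x)]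
  apply Finset.sum_congr rfl
  intro r _
  simp only [Matrix.transpose_apply, hA, Equiv.subLeft_apply, sub_sub_cancel, gpP]
  split_ifs
  · rw [one_mul, ← AddChar.map_add_eq_mul]
    congr 1; ring
  · simp

lemma gp_spec {F : Type*} [Field F] [Fintype F] [DecidableEq F] (ψ : AddChar F ℂ)
    (hψ : ψ.IsPrimitive) (n : ℕ)
    (A : Matrix F F ℂ) (hA : ∀ x y, A x y = if (y - x) ^ n = 1 then 1 else 0) :
    spectrum ℂ A = Set.range (gpLam ψ n) := by
  obtain ⟨u, hu⟩ := gpP_unit ψ hψ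
  have h := gp_AP ψ n A hA
  rw [← hu] at h
  have : A = u * Matrix.diagonal (gpLam ψ n) * (u⁻¹ : (Matrix F F ℂ)ˣ) := by
    rw [← h, mul_assoc, Units.mul_inv, mul_one]
  rw [this, spectrum.units_conjugate, spectrum_diagonal]

lemma gp_nonreal {F : Type*} [Field F] [Fintype F] [DecidableEq F] (ψ : AddChar F ℂ)
    (hψ : ψ.IsPrimitive) (n : ℕ) (hn : (-1 : F) ^ n ≠ 1)
    (A : Matrix F F ℂ) (hA : ∀ x y, A x y = if (y - x) ^ n = 1 then 1 else 0) :
    ∃ b, gpLam ψ n (-b) ≠ gpLam ψ n b := by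
  by_contra! hcon
  have h1 := gp_AP ψ n A hA
  have h2 := gp_ATP ψ n A hA
  simp_rw [hcon] at h2
  have h3 := (gpP_unit ψ hψ).mul_right_cancel (h1.trans h2.symm)
  have h4 := congrFun (congrFun h3 0) 1
  rw [Matrix.transpose_apply, hA, hA] at h4
  simp [hn] at h4

/-- closure under addition -/
lemma gp_forward {F : Type*} [Field F] [Fintype F] [DecidableEq F] (ψ : AddChar F ℂ)
    (hψ : ψ.IsPrimitive) (n : ℕ) 
    (A : Matrix F F ℂ) (hA : ∀ x y, A x y = if (y - x) ^ n = 1 then 1 else 0)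
    (c d : ℂ) (hcd : ∀ b, gpLam ψ n b + gpLam ψ n (-b) = c ∨ gpLam ψ n b + gpLam ψ n (-b) = d)
    (x y : F) (hx : x ^ n = 1 ∨ (-x) ^ n = 1) (hy : y ^ n = 1 ∨ (-y) ^ n = 1) (hxy : x + y ≠ 0) :
    (x + y) ^ n = 1 ∨ (-(x + y)) ^ n = 1 := by
  set f : F → ℕ := fun x => (if x ^ n = 1 then 1 else 0) + (if (-x) ^ n = 1 then 1 else 0) with hf
  have hf0 : ∀ x, f x ≠ 0 ↔ (x ^ n = 1 ∨ (-x) ^ n = 1) := by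
    intro x; simp only [hf]; split_ifs <;> simp_all
  set B := A + A.transpose with hB
  have hBf : ∀ x y, B x y = (f (y - x) : ℂ) := by
    intro x y
    simp only [hB, hf, Matrix.add_apply, Matrix.transpose_apply, hA, neg_sub]
    push_cast; rfl
  set E : Matrix F F ℂ := Matrix.diagonal (fun b => gpLam ψ n b + gpLam ψ n (-b)) with hE
  have hBP : B * gpP ψ = gpP ψ * E := by
    rw [hB, add_mul, gp_AP ψ n A hA, gp_ATP ψ n A hA, ← mul_add, Matrix.diagonal_add]
  have hEE : E * E = (c + d) • E - (c * d) • (1 : Matrix F F ℂ) := by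
    rw [hE, Matrix.diagonal_mul_diagonal, ← Matrix.diagonal_one, ← Matrix.diagonal_smul,
      ← Matrix.diagonal_smul, Matrix.diagonal_sub]
    congr 1
    ext b
    simp only [Pi.smul_apply, smul_eq_mul]
    rcases hcd b with h | h <;> rw [h] <;> ring
  have hBB : B * B = (c + d) • B - (c * d) • (1 : Matrix F F ℂ) := by
    apply (gpP_unit ψ hψ).mul_right_cancel
    rw [mul_assoc, hBP, ← mul_assoc, hBP, mul_assoc, hEE, sub_mul, mul_sub, Matrix.smul_mul,
      Matrix.smul_mul, hBP, Matrix.mul_smul, Matrix.mul_smul, one_mul, mul_one]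
  have h0 := congrFun (congrFun hBB 0) (x + y)
  rw [Matrix.sub_apply, Matrix.smul_apply, Matrix.smul_apply, Matrix.one_apply_ne hxy.symm,
    Matrix.mul_apply, hBf] at h0
  simp_rw [hBf] at h0
  rw [← hf0]
  intro hzero
  rw [sub_zero, hzero] at h0
  simp only [Nat.cast_zero, smul_zero, sub_zero] at h0
  have h1 : ∑ z : F, f z * f (x + y - z) = 0 := by exact_mod_cast h0
  rw [Finset.sum_eq_zero_iff] at h1
  have h2 := h1 x (Finset.mem_univ _)
  rw [add_sub_cancel_left] at h2
  exact (mul_ne_zero ((hf0 x).2 hx) ((hf0 y).2 hy)) h2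

lemma gpLam_zero {F : Type*} [Field F] [Fintype F] (ψ : AddChar F ℂ) (n e : ℕ)
    (h : e * n = Fintype.card F - 1) (b : F) (hb : ∀ r : F, r ^ n = 1 → ψ (b * r) = 1) :
    gpLam ψ n b = n := by
  rw [gpLam, Finset.sum_congr rfl (g := fun _ => (1 : ℂ))]
  · rw [Finset.sum_const, gp_card n e h]; simp
  · intro r hr
    exact hb r (by simpa using hr)

lemma gp_sq {F : Type*} [Field F] [Fintype F] (ψ : AddChar F ℂ) (n : ℕ) (hn : n ≠ 0) (b : F) :
    gpLam ψ n b ^ 2 = ∑ s ∈ Finset.univ.filter (fun x : F => x ^ n = 1), gpLam ψ n (b * (1 + s)) := by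
  have : ∀ s ∈ Finset.univ.filter (fun x : F => x ^ n = 1), gpLam ψ n b * ψ (b * s) =
     ∑ r ∈ Finset.univ.filter (fun x : F => x ^ n = 1), ψ (b * (r + s)) := by
    intro s _
    rw [gpLam, Finset.sum_mul]
    refine Finset.sum_congr rfl fun r _ => ?_
    rw [← AddChar.map_add_eq_mul, mul_add]
  rw [sq]
  nth_rw 2 [gpLam]
  rw [Finset.mul_sum, Finset.sum_congr rfl this, Finset.sum_comm]
  simp_rw [gpLam]
  conv_rhs => rw [Finset.sum_comm]
  refine Finset.sum_congr rfl fun r hr => ?_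
  have hr' : r ^ n = 1 := by simpa using hr
  have hr0 : r ≠ 0 := by rintro rfl; simp [hn] at hr'
  rw [Finset.sum_filter, Finset.sum_filter, ← Equiv.sum_comp (Equiv.mulLeft₀ r hr0)]
  refine Finset.sum_congr rfl fun s _ => ?_
  simp only [Equiv.mulLeft₀_apply, mul_pow, hr', one_mul]
  congr 2
  ring

/-- quadratic relation -/
lemma gp_backward {F : Type*} [Field F] [Fintype F] (ψ : AddChar F ℂ) (n e : ℕ) (hn : Odd n)
    (h : e * n = Fintype.card F - 1) (h2 : (2 : F) ≠ 0)
    (hadd : ∀ x y : F, x ^ (2 * n + 1) = x → y ^ (2 * n + 1) = y → (x + y) ^ (2 * n + 1) = x + y) :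
    ∃ u v : ℂ, ∀ b, gpLam ψ n b = n ∨
      ((gpLam ψ n b) ^ 2 + u * gpLam ψ n b + v = 0) := by
  have hn0 : n ≠ 0 := by rintro rfl; simp at hn
  have hS : ∀ x : F, x ^ (2 * n + 1) = x ↔ (x = 0 ∨ x ^ n = 1 ∨ x ^ n = -1) := by
    intro x
    have : x ^ (2 * n + 1) - x = x * ((x ^ n - 1) * (x ^ n + 1)) := by ring
    rw [← sub_eq_zero, this, mul_eq_zero, mul_eq_zero, sub_eq_zero, ← eq_neg_iff_add_eq_zero]
  have hcard := gp_card n e h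
  set R := Finset.univ.filter (fun x : F => x ^ n = 1) with hR
  set α : ℕ := (R.filter (fun s => (1 + s) ^ n = 1)).card with hα
  set β : ℕ := (R.filter (fun s => ¬ (1 + s) ^ n = 1)).card with hβ
  have hsq : ∀ b, gpLam ψ n b ^ 2 = α * gpLam ψ n b + β * gpLam ψ n (-b) := by
    intro b
    rw [gp_sq ψ n hn0 b, ← Finset.sum_filter_add_sum_filter_not _ (fun s => (1 + s) ^ n = 1)]
    congr 1
    · rw [Finset.sum_congr rfl (g := fun _ => gpLam ψ n b), Finset.sum_const, nsmul_eq_mul]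
      intro s hs
      exact gpLam_mul ψ n hn0 b _ (Finset.mem_filter.1 hs).2
    · rw [Finset.sum_congr rfl (g := fun _ => gpLam ψ n (-b)), Finset.sum_const, nsmul_eq_mul]
      intro s hs
      simp only [Finset.mem_filter, Finset.mem_univ, true_and] at hs
      obtain ⟨hs1, hs2⟩ := hs
      have h3 := (hS _).1 (hadd 1 s (by simp) ((hS s).2 (Or.inr (Or.inl hs1))))
      rcases h3 with h3 | h3 | h3
      · exfalso
        have : s = -1 := by linear_combination h3
        rw [this, hn.neg_one_pow] at hs1
        apply h2
        linear_combination -hs1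
      · exact absurd h3 hs2
      · rw [← gpLam_mul ψ n hn0 (-b) (-(1 + s)) (by rw [hn.neg_pow, h3, neg_neg])]
        congr 1; ring
  have htr : ∀ b, gpLam ψ n b = n ∨ gpLam ψ n b + gpLam ψ n (-b) = -1 := by
    intro b
    by_cases hb : ∀ x : F, x ^ (2 * n + 1) = x → ψ (b * x) = 1
    · left
      exact gpLam_zero ψ n e h b fun r hr => hb r ((hS r).2 (Or.inr (Or.inl hr)))
    · right
      push Not at hb
      obtain ⟨t, ht, htψ⟩ := hb
      have hmneg : ∀ x : F, x ^ (2 * n + 1) = x → (-x) ^ (2 * n + 1) = -x := by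
        intro x hx
        rw [Odd.neg_pow ⟨n, rfl⟩, hx]
      have hT : ∑ x : F, (if x ^ (2 * n + 1) = x then ψ (b * x) else 0) = 0 := by
        set T := ∑ x : F, (if x ^ (2 * n + 1) = x then ψ (b * x) else 0) with hTd
        have : T = ψ (b * t) * T := by
          conv_lhs => rw [hTd, ← Equiv.sum_comp (Equiv.addLeft t)]
          rw [hTd, Finset.mul_sum]
          refine Finset.sum_congr rfl fun x _ => ?_
          simp only [Equiv.coe_addLeft]
          have hiff : (t + x) ^ (2 * n + 1) = t + x ↔ x ^ (2 * n + 1) = x := by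
            constructor
            · intro hx
              have := hadd _ _ (hmneg t ht) hx
              simpa using this
            · intro hx
              exact hadd _ _ ht hx
          simp only [hiff]
          split_ifs
          · rw [mul_add, AddChar.map_add_eq_mul]
          · simp
        have h4 : (ψ (b * t) - 1) * T = 0 := by linear_combination -this
        exact (mul_eq_zero.1 h4).resolve_left (sub_ne_zero.2 htψ)
      have hT2 : ∑ x : F, (if x ^ (2 * n + 1) = x then ψ (b * x) else 0)
          = 1 + (gpLam ψ n b + gpLam ψ n (-b)) := by
        have hm : gpLam ψ n (-b) = ∑ x : F, if x ^ n = -1 then ψ (b * x) else 0 := by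
          rw [gpLam, Finset.sum_filter, ← Equiv.sum_comp (Equiv.neg F)]
          refine Finset.sum_congr rfl fun x _ => ?_
          simp only [Equiv.neg_apply, hn.neg_pow, neg_mul_neg, neg_eq_iff_eq_neg]
        have hz : (1 : ℂ) = ∑ x : F, if x = 0 then ψ (b * x) else 0 := by simp
        rw [hm, gpLam, Finset.sum_filter, hz, ← Finset.sum_add_distrib, ← Finset.sum_add_distrib]
        refine Finset.sum_congr rfl fun x _ => ?_
        have h11 : (1 : F) ≠ -1 := by
          intro h; apply h2; linear_combination h
        simp only [hS]
        by_cases h0 : x = 0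
        · subst h0
          simp [hn0]
        · by_cases h1 : x ^ n = 1
          · simp [h0, h1, h11]
          · simp [h0, h1]
      rw [hT2] at hT
      linear_combination hT
  refine ⟨β - α, β, fun b => ?_⟩
  rcases htr b with h5 | h5
  · exact Or.inl h5
  · right
    linear_combination hsq b + β * h5

lemma gp_arith (p m k n a : ℕ) (hp : p.Prime) (hm : 1 ≤ m) (hn : Odd n)
    (hkn : k * n = p ^ m - 1) (ha : 0 < a) (hna : n ∣ p ^ a - 1)
    (hleast : ∀ b : ℕ, 0 < b → n ∣ p ^ b - 1 → a ≤ b) :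
    (k = 2 * ((p ^ m - 1) / (p ^ a - 1)) ∧ p ^ a % 4 = 3) ↔ 2 * n + 1 = p ^ a := by
  have hg : n ∣ p ^ (a.gcd m) - 1 := by
    rw [← Nat.pow_sub_one_gcd_pow_sub_one]
    exact Nat.dvd_gcd hna ⟨k, by rw [← hkn, mul_comm]⟩
  have ham : a ∣ m := by
    have h1 := hleast _ (Nat.gcd_pos_of_pos_left m ha) hg
    have h2 := Nat.le_antisymm h1 (Nat.gcd_le_left m ha)
    rw [h2]; exact Nat.gcd_dvd_right a m
  have hdvd : p ^ a - 1 ∣ p ^ m - 1 := Nat.pow_sub_one_dvd_pow_sub_one p ham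
  have hpa : 1 < p ^ a := Nat.one_lt_pow ha.ne' hp.one_lt
  have hpm : 1 < p ^ m := Nat.one_lt_pow (by omega) hp.one_lt
  obtain ⟨t, ht⟩ := hdvd
  have htpos : 0 < t := by
    rcases Nat.eq_zero_or_pos t with h | h
    · subst h; omega
    · exact h
  rw [ht, Nat.mul_div_cancel_left _ (by omega)]
  rw [ht] at hkn
  have hnp : 0 < n := hn.pos
  constructor
  · rintro ⟨rfl, -⟩
    have : t * (2 * n) = t * (p ^ a - 1) := by rw [mul_comm t (p^a-1), ← hkn]; ring
    have := Nat.eq_of_mul_eq_mul_left htpos this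
    omega
  · intro h
    have h1 : p ^ a - 1 = 2 * n := by omega
    refine ⟨?_, ?_⟩
    · rw [h1] at hkn
      have : k * n = (2 * t) * n := by rw [hkn]; ring
      exact Nat.eq_of_mul_eq_mul_right hnp this
    · obtain ⟨j, rfl⟩ := hn
      omega

theorem gpDigraph_three_eigenvalues
    (p m k : ℕ) (hp : p.Prime) (hodd : Odd p) (hm : 1 ≤ m)
    (F : Type*) [Field F] [Fintype F] [DecidableEq F]
    (hF : Fintype.card F = p ^ m)
    (hk : 0 < k) (hkdvd : k ∣ p ^ m - 1)
    (hdir : ¬ ∃ z : F, z ≠ 0 ∧ z ^ k = -1)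
    (n : ℕ) (hn : n = (p ^ m - 1) / k)
    (a : ℕ) (ha : 0 < a) (hna : n ∣ p ^ a - 1)
    (hleast : ∀ b : ℕ, 0 < b → n ∣ p ^ b - 1 → a ≤ b)
    (A : Matrix F F ℂ)
    (hA : ∀ x y : F, A x y = if ∃ z : F, z ≠ 0 ∧ z ^ k = y - x then 1 else 0) :
    3 ≤ (spectrum ℂ A).ncard ∧
    ((spectrum ℂ A).ncard = 3 ↔
      (k = 2 * ((p ^ m - 1) / (p ^ a - 1)) ∧ p ^ a % 4 = 3)) := by
  have hkn : k * n = p ^ m - 1 := by rw [hn]; exact Nat.mul_div_cancel' hkdvd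
  have hknF : k * n = Fintype.card F - 1 := by rw [hF, hkn]
  have hm1 : (-1 : F) ^ n ≠ 1 := by rwa [gp_mem k n hknF] at hdir
  have hnodd : Odd n := by
    rcases Nat.even_or_odd n with h | h
    · exact absurd h.neg_one_pow hm1
    · exact h
  have hA' : ∀ x y, A x y = if (y - x) ^ n = 1 then 1 else 0 := by
    intro x y
    rw [hA]
    simp only [gp_mem k n hknF]
  rw [gp_arith p m k n a hp hm hnodd hkn ha hna hleast]
  have : Fact p.Prime := ⟨hp⟩
  have : CharP F p := charP_of_card_eq_prime_pow hF
  have h2 : (2 : F) ≠ 0 := by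
    intro h
    apply hm1
    rw [hnodd.neg_one_pow]
    linear_combination -h
  set ψ := AddChar.FiniteField.primitiveChar_to_Complex F with hψd
  have hψ : ψ.IsPrimitive := AddChar.FiniteField.primitiveChar_to_Complex_isPrimitive F
  have hspec := gp_spec ψ hψ n A hA'
  obtain ⟨b₀, hb₀⟩ := gp_nonreal ψ hψ n hm1 A hA'
  have hl0 : gpLam ψ n 0 = n := gpLam_zero ψ n k hknF 0 (by simp)
  set θ := gpLam ψ n b₀ with hθ
  set θ' := gpLam ψ n (-b₀) with hθ'
  have hconj : θ' = (starRingEnd ℂ) θ := gpLam_neg ψ n b₀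
  have hθn : θ ≠ n := by
    intro h
    apply hb₀
    rw [hconj, h]; simp
  have hθ'n : θ' ≠ n := by
    intro h
    apply hθn
    have := congrArg (starRingEnd ℂ) (hconj.symm.trans h)
    simpa using this
  have hcard3 : ({(n : ℂ), θ, θ'} : Set ℂ).ncard = 3 :=
    Set.ncard_eq_three.2 ⟨n, θ, θ', hθn.symm, hθ'n.symm, hb₀.symm, rfl⟩
  have hsub : ({(n : ℂ), θ, θ'} : Set ℂ) ⊆ spectrum ℂ A := by
    rw [hspec]
    rintro x (rfl | rfl | rfl)
    · exact ⟨0, hl0⟩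
    · exact ⟨b₀, rfl⟩
    · exact ⟨-b₀, rfl⟩
  have hfin : (spectrum ℂ A).Finite := by rw [hspec]; exact Set.finite_range _
  have hge : 3 ≤ (spectrum ℂ A).ncard := by
    rw [← hcard3]; exact Set.ncard_le_ncard hsub hfin
  refine ⟨hge, ?_, ?_⟩
  · intro h3
    have heq : ({(n : ℂ), θ, θ'} : Set ℂ) = spectrum ℂ A :=
      Set.eq_of_subset_of_ncard_le hsub (by rw [h3, hcard3]) hfin
    have hconj' : θ = (starRingEnd ℂ) θ' := by rw [hconj]; simp
    have hcd : ∀ b, gpLam ψ n b + gpLam ψ n (-b) = 2 * n ∨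
        gpLam ψ n b + gpLam ψ n (-b) = θ + θ' := by
      intro b
      have hb : gpLam ψ n b ∈ ({(n : ℂ), θ, θ'} : Set ℂ) := by
        rw [heq, hspec]; exact ⟨b, rfl⟩
      rw [gpLam_neg]
      rcases hb with hb | hb | hb
      · left; rw [hb]; simp; ring
      · right; rw [hb, ← hconj]
      · right
        rw [Set.mem_singleton_iff] at hb
        rw [hb, ← hconj', add_comm]
    have hfw := gp_forward ψ hψ n A hA' _ _ hcd
    let S : AddSubgroup F :=
      { carrier := {x | x = 0 ∨ (x ^ n = 1 ∨ (-x) ^ n = 1)}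
        zero_mem' := Or.inl rfl
        neg_mem' := by
          rintro x (rfl | hx | hx)
          · left; simp
          · right; right; rwa [neg_neg]
          · right; left; exact hx
        add_mem' := by
          rintro x y (rfl | hx) (rfl | hy)
          · left; simp
          · right; rwa [zero_add]
          · right; rwa [add_zero]
          · by_cases hxy : x + y = 0
            · exact Or.inl hxy
            · exact Or.inr (hfw x y hx hy hxy) }
    have hScard : Nat.card S = 2 * n + 1 := by
      have h2n : 2 ∣ k := by
        have : 2 ∣ k * n := by
          rw [hkn]
          have h1 : Odd (p ^ m) := hodd.pow
          obtain ⟨j, hj⟩ := h1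
          exact ⟨j, by omega⟩
        refine (Nat.Coprime.dvd_mul_right ?_).1 this
        exact (Nat.coprime_two_left).2 hnodd
      obtain ⟨e, he⟩ := h2n
      have hc := gp_card (F := F) (2 * n) e (by rw [← hknF, he]; ring)
      have hSe : (S : Set F) = ((insert 0 (Finset.univ.filter (fun x : F => x ^ (2 * n) = 1)) : Finset F) : Set F) := by
        ext x
        have h5 : x ^ (2 * n) = 1 ↔ (x ^ n = 1 ∨ (-x) ^ n = 1) := by
          rw [hnodd.neg_pow, neg_eq_iff_eq_neg, mul_comm, pow_mul, sq_eq_one_iff]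
        simp only [Finset.coe_insert, Finset.coe_filter, Finset.mem_univ, true_and, Set.mem_insert_iff,
          Set.mem_ofPred_eq, h5]
        rfl
      have : Nat.card S = (S : Set F).ncard := rfl
      rw [this, hSe, Set.ncard_coe_finset, Finset.card_insert_of_notMem (by simp [hnodd.pos.ne'])]
      congr 1
      convert hc using 2
      ext x
      simp
    have hdvd := AddSubgroup.card_addSubgroup_dvd_card S
    rw [hScard, Nat.card_eq_fintype_card, hF, Nat.dvd_prime_pow hp] at hdvd
    obtain ⟨c, -, hc⟩ := hdvd
    have hc0 : 0 < c := by
      rcases Nat.eq_zero_or_pos c with h | h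
      · subst h
        have := hnodd.pos
        simp at hc; omega
      · exact h
    have hac := hleast c hc0 ⟨2, by omega⟩
    rcases Nat.lt_or_ge a c with hlt | hle
    · exfalso
      have hp3 : 3 ≤ p := by
        have := hp.two_le
        obtain ⟨j, hj⟩ := hodd
        omega
      have h6 : p ^ a * 3 ≤ p ^ c := by
        calc p ^ a * 3 ≤ p ^ a * p := Nat.mul_le_mul_left _ hp3
          _ = p ^ (a + 1) := (pow_succ _ _).symm
          _ ≤ p ^ c := Nat.pow_le_pow_right hp.pos hlt
      have hpa : 1 < p ^ a := Nat.one_lt_pow ha.ne' hp.one_lt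
      have := Nat.le_of_dvd (by omega) hna
      omega
    · rw [hc, Nat.le_antisymm hac hle]
  · intro h
    have hadd : ∀ x y : F, x ^ (2 * n + 1) = x → y ^ (2 * n + 1) = y →
        (x + y) ^ (2 * n + 1) = x + y := by
      intro x y hx hy
      rw [h] at hx hy ⊢
      rw [add_pow_char_pow, hx, hy]
    obtain ⟨u, v, huv⟩ := gp_backward ψ n k hnodd hknF h2 hadd
    have e1 := (huv b₀).resolve_left hθn
    have e2 := (huv (-b₀)).resolve_left hθ'n
    rw [← hθ] at e1
    rw [← hθ'] at e2
    have e3 : θ' + θ + u = 0 := by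
      have : (θ' - θ) * (θ' + θ + u) = 0 := by linear_combination e2 - e1
      exact (mul_eq_zero.1 this).resolve_left (sub_ne_zero.2 hb₀)
    have hsup : spectrum ℂ A ⊆ ({(n : ℂ), θ, θ'} : Set ℂ) := by
      rw [hspec]
      rintro _ ⟨b, rfl⟩
      rcases huv b with h7 | h7
      · exact Or.inl h7
      · right
        have : (gpLam ψ n b - θ) * (gpLam ψ n b - θ') = 0 := by
          linear_combination h7 - e1 + (θ - gpLam ψ n b) * e3
        rcases mul_eq_zero.1 this with h8 | h8
        · exact Or.inl (sub_eq_zero.1 h8)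
        · exact Or.inr (sub_eq_zero.1 h8)
    rw [Set.Subset.antisymm hsup hsub, hcard3]
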